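/- For every fixed integer N ≥ 2, limsup_{m→∞} D_{ℝ,m}(N)^{1/m} ≥ 27^{1/8}; in particular the real polynomial Bohnenblust–Hille inequality restricted to polynomials in N variables has exponentially growing constants. -/

import Mathlib

open MvPolynomial Filter

/-- The sup norm of a real polynomial in `n` variables over the cube `[-1,1]^n`. -/
noncomputable def supNorm {n : ℕ} (P : MvPolynomial (Fin n) ℝ) : ℝ :=
  sSup {y : ℝ | ∃ x : Fin n → ℝ, (∀ i, |x i| ≤ 1) ∧ y = |eval x P|}

/-- The `ℓ_p` norm of the coefficients of a real polynomial. -/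
noncomputable def lpNorm {n : ℕ} (p : ℝ) (P : MvPolynomial (Fin n) ℝ) : ℝ :=
  (∑ α ∈ P.support, |coeff α P| ^ p) ^ (1 / p)

/-- The real polynomial Bohnenblust–Hille constant `D_{ℝ,m}`. -/
noncomputable def BHconst (m : ℕ) : ℝ :=
  sInf {D : ℝ | 0 < D ∧ ∀ (n : ℕ) (P : MvPolynomial (Fin n) ℝ),
    P.IsHomogeneous m → lpNorm (2 * m / (m + 1)) P ≤ D * supNorm P}

/-- The real polynomial Bohnenblust–Hille constant `D_{ℝ,m}(n)` in a fixed number `n`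
of variables. -/
noncomputable def BHconstN (m n : ℕ) : ℝ :=
  sInf {D : ℝ | 0 < D ∧ ∀ P : MvPolynomial (Fin n) ℝ,
    P.IsHomogeneous m → lpNorm (2 * m / (m + 1)) P ≤ D * supNorm P}

lemma aux_coeff (s : Finset ℕ) (c y : ℕ → ℝ) (hy : ∀ j ∈ s, |y j| ≤ 1) (a : ℕ) :
    |(∏ j ∈ s, (Polynomial.C (c j) * (Polynomial.X - Polynomial.C (y j)))).coeff a|
      ≤ ∏ j ∈ s, (2 * |c j|) := by
  induction s using Finset.induction_on generalizing a with
  | empty =>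
    simp only [Finset.prod_empty, Polynomial.coeff_one]
    split_ifs <;> simp
  | insert i s hi ih =>
    rw [Finset.prod_insert hi, Finset.prod_insert hi]
    have ih' := ih (fun j hj => hy j (Finset.mem_insert_of_mem hj))
    set f := ∏ j ∈ s, (Polynomial.C (c j) * (Polynomial.X - Polynomial.C (y j))) with hf
    set B := ∏ j ∈ s, (2 * |c j|) with hB
    have hB0 : 0 ≤ B := (abs_nonneg _).trans (ih' 0)
    have hyi := hy i (Finset.mem_insert_self _ _)
    rw [mul_assoc, Polynomial.coeff_C_mul, sub_mul, Polynomial.coeff_sub, Polynomial.coeff_C_mul,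
      abs_mul]
    have h1 : |(Polynomial.X * f).coeff a| ≤ B := by
      cases a with
      | zero => simpa using hB0
      | succ a => rw [Polynomial.coeff_X_mul]; exact ih' a
    have h2 : |y i * f.coeff a| ≤ B := by
      rw [abs_mul]
      calc |y i| * |f.coeff a| ≤ 1 * B := mul_le_mul hyi (ih' a) (abs_nonneg _) (by norm_num)
        _ = B := one_mul B
    have h3 : |(Polynomial.X * f).coeff a - y i * f.coeff a| ≤ 2 * B :=
      (abs_sub _ _).trans (by linarith)
    calc _ ≤ |c i| * (2 * B) := mul_le_mul_of_nonneg_left h3 (abs_nonneg _)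
      _ = _ := by ring

lemma aux_prod (m i : ℕ) (hi : i ≤ m) :
    ∏ j ∈ (Finset.range (m+1)).erase i, |(i:ℝ) - j| = (i.factorial : ℝ) * (m-i).factorial := by
  obtain ⟨k, rfl⟩ := Nat.exists_eq_add_of_le hi
  induction k with
  | zero =>
    have : (Finset.range (i+0+1)).erase i = Finset.range i := by
      ext x; simp; omega
    rw [this]
    clear hi this
    simp only [add_zero, Nat.sub_self, Nat.factorial_zero, Nat.cast_one, mul_one]
    rw [← Finset.prod_range_reflect, ← Finset.prod_range_add_one_eq_factorial]
    push_cast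
    refine Finset.prod_congr rfl fun j hj => ?_
    have hj := Finset.mem_range.1 hj
    rw [Nat.sub_sub, Nat.cast_sub (by omega)]
    push_cast
    rw [abs_of_nonneg] <;> [ring; (ring_nf; positivity)]
  | succ k ih =>
    have : (Finset.range (i+(k+1)+1)).erase i
        = insert (i+(k+1)) ((Finset.range (i+k+1)).erase i) := by
      ext x; simp; omega
    rw [this, Finset.prod_insert (by simp), ih (by omega)]
    have e1 : i + (k+1) - i = k+1 := by omega
    have e2 : i + k - i = k := by omega
    rw [e1, e2, Nat.factorial_succ]
    push_cast
    have : |(i:ℝ) - (i + (k+1))| = k+1 := by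
      rw [abs_sub_comm, add_sub_cancel_left, abs_of_nonneg (by positivity)]
    rw [this]; ring

lemma aux_weights (m : ℕ) (hm : 1 ≤ m) : ∃ (v : ℕ → ℝ) (w : ℕ → ℕ → ℝ),
    (∀ j ∈ Finset.range (m+1), |v j| ≤ 1) ∧
    (∀ a b, b ≤ m → ∑ j ∈ Finset.range (m+1), w a j * v j ^ b = if a = b then 1 else 0) ∧
    (∀ a, ∀ j ∈ Finset.range (m+1), |w a j| ≤ 6 ^ m) := by
  have hm0 : (0:ℝ) < m := by exact_mod_cast hm
  let v : ℕ → ℝ := fun j => -1 + 2 * j / m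
  have hv : ∀ j ∈ Finset.range (m+1), |v j| ≤ 1 := by
    intro j hj
    have hj : j ≤ m := by have := Finset.mem_range.1 hj; omega
    have hj' : (j:ℝ) ≤ m := by exact_mod_cast hj
    have : (j:ℝ)/m ≤ 1 := (div_le_one hm0).2 hj'
    have h0 : 0 ≤ (j:ℝ)/m := by positivity
    have e : v j = -1 + 2 * (j / m) := by simp only [v]; ring
    rw [e, abs_le]; constructor <;> linarith
  have hsub : ∀ i j, v i - v j = (2/m) * ((i:ℝ) - j) := by
    intro i j; simp only [v]; ring
  have hinj : Set.InjOn v (Finset.range (m+1)) := by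
    intro i _ j _ h
    have h' := hsub i j
    rw [h, sub_self] at h'
    have := (mul_eq_zero.1 h'.symm).resolve_left (by positivity)
    exact_mod_cast sub_eq_zero.1 this
  refine ⟨v, fun a j => (Lagrange.basis (Finset.range (m+1)) v j).coeff a, hv, ?_, ?_⟩
  · intro a b hb
    have h := Lagrange.eq_interpolate (s := Finset.range (m+1)) (v := v)
      (f := (Polynomial.X : Polynomial ℝ) ^ b) hinj (by
        rw [Polynomial.degree_X_pow, Finset.card_range]; exact_mod_cast (by omega))
    have h2 := congrArg (fun p => Polynomial.coeff p a) h
    simp only [Lagrange.interpolate_apply, Polynomial.finsetSum_coeff, Polynomial.coeff_C_mul,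
      Polynomial.coeff_X_pow, Polynomial.eval_pow, Polynomial.eval_X] at h2
    rw [h2]
    exact Finset.sum_congr rfl fun j _ => mul_comm _ _
  · intro a i hi
    have him : i ≤ m := by have := Finset.mem_range.1 hi; omega
    have := aux_coeff ((Finset.range (m+1)).erase i) (fun j => (v i - v j)⁻¹) v
      (fun j hj => hv j (Finset.mem_of_mem_erase hj)) a
    refine this.trans ?_
    have e : ∀ j, 2 * |(v i - v j)⁻¹| = m * |(i:ℝ) - j|⁻¹ := by
      intro j
      rw [hsub, abs_inv, abs_mul, abs_of_pos (by positivity : (0:ℝ) < 2/m), mul_inv]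
      field_simp
    rw [Finset.prod_congr rfl (fun j _ => e j), Finset.prod_mul_distrib, Finset.prod_const,
      Finset.prod_inv_distrib, aux_prod m i him, Finset.card_erase_of_mem hi, Finset.card_range,
      Nat.add_sub_cancel]
    have hch : (m.choose i : ℝ) * ((i.factorial : ℝ) * (m-i).factorial) = m.factorial := by
      rw [← mul_assoc]; exact_mod_cast Nat.choose_mul_factorial_mul_factorial him
    have hc2 : (m.choose i : ℝ) ≤ 2^m := by exact_mod_cast Nat.choose_le_two_pow m i
    have hexp : (m:ℝ)^m / m.factorial ≤ 3^m := by
      refine (Real.pow_div_factorial_le_exp (m:ℝ) hm0.le m).trans ?_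
      rw [← mul_one (m:ℝ), Real.exp_nat_mul]
      exact pow_le_pow_left₀ (Real.exp_pos _).le (by have := Real.exp_one_lt_d9; linarith) _
    have hpos : (0:ℝ) < (i.factorial : ℝ) * (m-i).factorial := by positivity
    have hpos2 : (0:ℝ) < m.factorial := by positivity
    have : (m:ℝ)^m * ((i.factorial : ℝ) * (m-i).factorial)⁻¹
        = (m:ℝ)^m / m.factorial * m.choose i := by
      rw [← hch]
      have : (m.choose i : ℝ) ≠ 0 := by exact_mod_cast (Nat.choose_pos him).ne'
      field_simp
    rw [this]
    calc _ ≤ (3:ℝ)^m * 2^m := mul_le_mul hexp hc2 (by positivity) (by positivity)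
      _ = 6^m := by rw [← mul_pow]; norm_num

lemma abs_eval_le_supNorm {n : ℕ} (P : MvPolynomial (Fin n) ℝ) (x : Fin n → ℝ)
    (hx : ∀ i, |x i| ≤ 1) : |eval x P| ≤ supNorm P := by
  apply le_csSup
  · refine ⟨∑ α ∈ P.support, |coeff α P|, ?_⟩
    rintro y ⟨x, hx, rfl⟩
    rw [MvPolynomial.eval_eq']
    refine (Finset.abs_sum_le_sum_abs _ _).trans (Finset.sum_le_sum fun α _ => ?_)
    rw [abs_mul, Finset.abs_prod]
    refine mul_le_of_le_one_right (abs_nonneg _) ?_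
    refine Finset.prod_le_one (fun _ _ => abs_nonneg _) fun i _ => ?_
    rw [abs_pow]
    exact pow_le_one₀ (abs_nonneg _) (hx i)
  · exact ⟨x, hx, rfl⟩

lemma supNorm_nonneg' {n : ℕ} (P : MvPolynomial (Fin n) ℝ) : 0 ≤ supNorm P :=
  (abs_nonneg _).trans (abs_eval_le_supNorm P 0 (by simp))

lemma support_le {n m : ℕ} {P : MvPolynomial (Fin n) ℝ} (hP : P.IsHomogeneous m)
    {β : Fin n →₀ ℕ} (hβ : β ∈ P.support) (i : Fin n) : β i ≤ m := by
  have h := hP (mem_support_iff.1 hβ)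
  rw [← h, Finsupp.weight_apply, Finsupp.sum_fintype _ _ (by simp)]
  simp only [Pi.one_apply, smul_eq_mul, mul_one]
  exact Finset.single_le_sum (f := fun i => β i) (fun _ _ => Nat.zero_le _) (Finset.mem_univ i)

lemma coeff_bound {n m : ℕ} (hm : 1 ≤ m) {P : MvPolynomial (Fin n) ℝ} (hP : P.IsHomogeneous m)
    (α : Fin n →₀ ℕ) : |coeff α P| ≤ ((m+1) * 6^m)^n * supNorm P := by
  obtain ⟨v, w, hv, hw, hwb⟩ := aux_weights m hm
  have key : coeff α P = ∑ t ∈ Fintype.piFinset (fun _ : Fin n => Finset.range (m+1)),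
      (∏ k, w (α k) (t k)) * eval (fun k => v (t k)) P := by
    simp_rw [MvPolynomial.eval_eq', Finset.mul_sum]
    rw [Finset.sum_comm]
    have : ∀ β ∈ P.support, (∑ t ∈ Fintype.piFinset (fun _ : Fin n => Finset.range (m+1)),
        (∏ k, w (α k) (t k)) * (coeff β P * ∏ k, v (t k) ^ β k))
        = if α = β then coeff β P else 0 := by
      intro β hβ
      have e : ∀ t : Fin n → ℕ, (∏ k, w (α k) (t k)) * (coeff β P * ∏ k, v (t k) ^ β k)
        = coeff β P * ∏ k, (w (α k) (t k) * v (t k) ^ β k) := by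
        intro t; rw [Finset.prod_mul_distrib]; ring
      simp_rw [e]
      rw [← Finset.mul_sum, ← Finset.prod_univ_sum (fun _ : Fin n => Finset.range (m+1))
        (fun k j => w (α k) j * v j ^ β k)]
      simp_rw [fun k => hw (α k) (β k) (support_le hP hβ k)]
      split_ifs with h
      · subst h; simp
      · obtain ⟨k, hk⟩ : ∃ k, α k ≠ β k := by
          by_contra! hh; exact h (Finsupp.ext hh)
        rw [Finset.prod_eq_zero (Finset.mem_univ k) (by simp [hk]), mul_zero]
    rw [Finset.sum_congr rfl this, Finset.sum_ite_eq]
    split_ifs with h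
    · rfl
    · exact notMem_support_iff.1 h
  rw [key]
  refine (Finset.abs_sum_le_sum_abs _ _).trans ?_
  have : ∀ t ∈ Fintype.piFinset (fun _ : Fin n => Finset.range (m+1)),
      |(∏ k, w (α k) (t k)) * eval (fun k => v (t k)) P| ≤ ((6:ℝ)^m)^n * supNorm P := by
    intro t ht
    have ht := Fintype.mem_piFinset.1 ht
    rw [abs_mul, Finset.abs_prod]
    refine mul_le_mul ?_ (abs_eval_le_supNorm _ _ fun i => hv _ (ht i)) (abs_nonneg _)
      (by positivity)
    refine (Finset.prod_le_prod (fun _ _ => abs_nonneg _) fun k _ => hwb _ _ (ht k)).trans ?_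
    simp
  refine (Finset.sum_le_card_nsmul _ _ _ this).trans (le_of_eq ?_)
  rw [Fintype.card_piFinset]
  simp only [Finset.card_range, Finset.prod_const, Finset.card_univ, Fintype.card_fin, nsmul_eq_mul]
  push_cast
  rw [mul_pow, mul_assoc]

lemma card_support_le {n m : ℕ} {P : MvPolynomial (Fin n) ℝ} (hP : P.IsHomogeneous m) :
    P.support.card ≤ (m+1)^n := by
  have : P.support.card ≤ (Fintype.piFinset (fun _ : Fin n => Finset.range (m+1))).card := by
    refine Finset.card_le_card_of_injOn (fun β => (β : Fin n → ℕ)) ?_ ?_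
    · intro β hβ
      simp only [Finset.coe_sort_coe, Finset.mem_coe, Fintype.mem_piFinset, Finset.mem_range]
      intro i
      have := support_le hP hβ i
      omega
    · intro a _ b _ h
      exact DFunLike.coe_injective h
  simpa [Fintype.card_piFinset] using this

lemma lp_upper {n m : ℕ} (hm : 1 ≤ m) {P : MvPolynomial (Fin n) ℝ} (hP : P.IsHomogeneous m) :
    lpNorm (2 * m / (m + 1)) P ≤ (24^n)^m * supNorm P := by
  have hm1 : (1:ℝ) ≤ m := by exact_mod_cast hm
  set p : ℝ := 2 * m / (m+1) with hp
  have hp1 : 1 ≤ p := by rw [hp, le_div_iff₀ (by positivity)]; linarith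
  have hp0 : 0 < p := by linarith
  set M : ℝ := ((m+1) * 6^m)^n * supNorm P with hM
  have hM0 : 0 ≤ M := mul_nonneg (by positivity) (supNorm_nonneg' P)
  have h1 : ∑ α ∈ P.support, |coeff α P| ^ p ≤ ((m+1:ℝ)^n) * M^p := by
    refine (Finset.sum_le_card_nsmul _ _ (M^p) fun α _ =>
      Real.rpow_le_rpow (abs_nonneg _) (coeff_bound hm hP α) hp0.le).trans ?_
    rw [nsmul_eq_mul]
    refine mul_le_mul_of_nonneg_right ?_ (Real.rpow_nonneg hM0 _)
    exact_mod_cast card_support_le hP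
  have hone : (1:ℝ) ≤ (m+1:ℝ)^n := one_le_pow₀ (by linarith)
  have h2 : lpNorm p P ≤ (m+1:ℝ)^n * M := by
    unfold lpNorm
    calc _ ≤ (((m+1:ℝ)^n) * M^p) ^ (1/p) := Real.rpow_le_rpow
            (Finset.sum_nonneg fun _ _ => Real.rpow_nonneg (abs_nonneg _) _) h1 (by positivity)
      _ = ((m+1:ℝ)^n) ^ (1/p) * M := by
          rw [Real.mul_rpow (by positivity) (Real.rpow_nonneg hM0 _), one_div,
            Real.rpow_rpow_inv hM0 hp0.ne']
      _ ≤ _ := by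
          refine mul_le_mul_of_nonneg_right ?_ hM0
          exact Real.rpow_le_self_of_one_le hone ((div_le_one hp0).2 hp1)
  refine h2.trans ?_
  rw [hM, ← mul_assoc]
  refine mul_le_mul_of_nonneg_right ?_ (supNorm_nonneg' P)
  have h3 : (m+1:ℝ) ≤ 2^m := by exact_mod_cast Nat.lt_two_pow_self (n := m)
  rw [← mul_pow, ← pow_mul, mul_comm n m, pow_mul]
  refine pow_le_pow_left₀ (by positivity) ?_ _
  calc (m+1:ℝ) * ((m+1) * 6^m) ≤ 2^m * (2^m * 6^m) := by gcongr
    _ = 24^m := by rw [← mul_pow, ← mul_pow]; norm_num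

lemma BH_mem {m : ℕ} (n : ℕ) (hm : 1 ≤ m) :
    ((24:ℝ)^n)^m ∈ {D : ℝ | 0 < D ∧ ∀ P : MvPolynomial (Fin n) ℝ,
    P.IsHomogeneous m → lpNorm (2 * m / (m + 1)) P ≤ D * supNorm P} :=
  ⟨by positivity, fun _ hP => lp_upper hm hP⟩

lemma BH_upper {m : ℕ} (n : ℕ) (hm : 1 ≤ m) : BHconstN m n ≤ ((24:ℝ)^n)^m :=
  csInf_le ⟨0, fun _ h => h.1.le⟩ (BH_mem n hm)

lemma BH_nonneg (m n : ℕ) : 0 ≤ BHconstN m n := Real.sInf_nonneg fun _ h => h.1.le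

lemma le_lp {n : ℕ} (P : MvPolynomial (Fin n) ℝ) {p : ℝ} (hp : 0 < p) (α : Fin n →₀ ℕ) :
    |coeff α P| ≤ lpNorm p P := by
  unfold lpNorm
  by_cases h : α ∈ P.support
  · calc |coeff α P| = (|coeff α P| ^ p)^(1/p) := by
          rw [one_div, Real.rpow_rpow_inv (abs_nonneg _) hp.ne']
      _ ≤ _ := by
        refine Real.rpow_le_rpow (Real.rpow_nonneg (abs_nonneg _) _) ?_ (by positivity)
        exact Finset.single_le_sum (f := fun α => |coeff α P| ^ p)
          (fun _ _ => Real.rpow_nonneg (abs_nonneg _) _) h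
  · rw [notMem_support_iff.1 h, abs_zero]
    exact Real.rpow_nonneg (Finset.sum_nonneg fun _ _ => Real.rpow_nonneg (abs_nonneg _) _) _

lemma quartic (x y : ℝ) (hx : |x| ≤ 1) (hy : |y| ≤ 1) :
    |x^3*y - x*y^3| ≤ 2 / √27 := by
  have ha : x^2 ≤ 1 := (sq_le_one_iff_abs_le_one x).2 hx
  have hb : y^2 ≤ 1 := (sq_le_one_iff_abs_le_one y).2 hy
  have key : ∀ a b : ℝ, 0 ≤ b → b ≤ a → a ≤ 1 → a*b*(a-b)^2 ≤ 4/27 := by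
    intro a b hb hab ha
    have h1 : (a-b)^2 ≤ (1-b)^2 := pow_le_pow_left₀ (by linarith) (by linarith) _
    have h2 : a*b ≤ b := mul_le_of_le_one_left hb ha
    have h3 : a*b*(a-b)^2 ≤ b*(1-b)^2 := mul_le_mul h2 h1 (sq_nonneg _) hb
    have h4 : 0 ≤ (b-1/3)^2*(4/3-b) := mul_nonneg (sq_nonneg _) (by linarith)
    nlinarith
  refine abs_le_of_sq_le_sq ?_ (by positivity)
  rw [div_pow, Real.sq_sqrt (by norm_num)]
  rcases le_total (y^2) (x^2) with h | h
  · have := key _ _ (sq_nonneg y) h ha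
    nlinarith
  · have := key _ _ (sq_nonneg x) h hb
    nlinarith

lemma BH_lower (N : ℕ) (hN : 2 ≤ N) (n : ℕ) (hn : 1 ≤ n) :
    (√27)^n ≤ (n+1) * BHconstN (4*n) N := by
  let i0 : Fin N := ⟨0, by omega⟩
  let i1 : Fin N := ⟨1, by omega⟩
  have h01 : i0 ≠ i1 := by simp [i0, i1]
  let P : MvPolynomial (Fin N) ℝ := (X i0 ^ 3 * X i1 - X i0 * X i1 ^ 3)^n
  have hP : P.IsHomogeneous (4*n) := by
    refine IsHomogeneous.pow (m := 4) ?_ n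
    refine IsHomogeneous.sub ?_ ?_
    · exact ((isHomogeneous_X ℝ i0).pow 3).mul (isHomogeneous_X ℝ i1)
    · exact (isHomogeneous_X ℝ i0).mul ((isHomogeneous_X ℝ i1).pow 3)
  have hsup : supNorm P ≤ (2/√27)^n := by
    apply csSup_le
    · exact ⟨_, 0, by simp, rfl⟩
    · rintro _ ⟨x, hx, rfl⟩
      simp only [P, map_pow, map_sub, map_mul, eval_X, abs_pow]
      exact pow_le_pow_left₀ (abs_nonneg _) (quartic _ _ (hx _) (hx _)) _
  let e : ℕ → (Fin N →₀ ℕ) := fun k =>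
    Finsupp.single i0 (3*k + (n-k)) + Finsupp.single i1 (k + 3*(n-k))
  have hexp : P = ∑ k ∈ Finset.range (n+1),
      monomial (e k) ((-1:ℝ)^(n-k) * (n.choose k)) := by
    simp only [P]
    rw [sub_eq_add_neg, add_pow]
    refine Finset.sum_congr rfl fun k _ => ?_
    rw [← mul_one ((-1:ℝ)^(n-k) * (n.choose k)), ← smul_eq_mul _ (1:ℝ), ← smul_monomial]
    have : monomial (e k) (1:ℝ) = X i0 ^ (3*k + (n-k)) * X i1 ^ (k + 3*(n-k)) := by
      simp only [e, X_pow_eq_monomial, monomial_mul, mul_one]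
    rw [this, smul_eq_C_mul, neg_pow]
    simp only [map_mul, map_pow, map_neg, map_one, map_natCast]
    ring
  have hcoeff : coeff (e (n/2)) P = (-1:ℝ)^(n-n/2) * (n.choose (n/2)) := by
    rw [hexp, coeff_sum, Finset.sum_eq_single (n/2)]
    · rw [coeff_monomial, if_pos rfl]
    · intro k hk hne
      rw [coeff_monomial, if_neg]
      intro h
      have h' := DFunLike.congr_fun h i0
      simp [e, h01, h01.symm, Finsupp.single_apply] at h'
      have := Finset.mem_range.1 hk
      omega
    · intro h; exact absurd (Finset.mem_range.2 (by omega)) h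
  have hch : (2:ℝ)^n ≤ (n+1) * n.choose (n/2) := by
    have : 2^n ≤ (n+1) * n.choose (n/2) := by
      rw [← Nat.sum_range_choose]
      refine (Finset.sum_le_card_nsmul _ _ _ fun k _ => Nat.choose_le_middle k n).trans ?_
      simp
    exact_mod_cast this
  have hs : (0:ℝ) < √27 := by positivity
  have : (√27)^n / (n+1) ≤ BHconstN (4*n) N := by
    refine le_csInf ⟨_, BH_mem N (by omega)⟩ ?_
    rintro D ⟨hD, h⟩
    have h1 := h P hP
    have hp : (0:ℝ) < 2 * (4*n : ℕ) / ((4*n : ℕ) + 1) := by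
      have : (0:ℝ) < n := by exact_mod_cast hn
      push_cast; positivity
    have h2 := le_lp P hp (e (n/2))
    rw [hcoeff, abs_mul, abs_pow, abs_neg, abs_one, one_pow, one_mul, Nat.abs_cast] at h2
    have h3 : (n.choose (n/2) : ℝ) ≤ D * (2/√27)^n :=
      (h2.trans h1).trans (mul_le_mul_of_nonneg_left hsup hD.le)
    have h4 : (2:ℝ)^n ≤ (n+1) * (D * (2/√27)^n) :=
      hch.trans (mul_le_mul_of_nonneg_left h3 (by positivity))
    rw [div_pow, ← mul_div_assoc, ← mul_div_assoc, le_div_iff₀ (by positivity)] at h4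
    rw [div_le_iff₀ (by positivity)]
    have h5 : (0:ℝ) < 2^n := by positivity
    refine le_of_mul_le_mul_left ?_ h5
    linarith
  rw [div_le_iff₀ (by positivity)] at this
  linarith

/-- For every fixed integer `N ≥ 2`, the limsup is at least `27^{1/8}`. -/
theorem real_BH_limsup_fixed_dim (N : ℕ) (hN : 2 ≤ N) :
    (27 : ℝ) ^ ((1 : ℝ) / 8) ≤ limsup (fun m : ℕ => BHconstN m N ^ ((m : ℝ)⁻¹)) atTop := by
  have hbdd : IsBoundedUnder (· ≤ ·) atTop (fun m : ℕ => BHconstN m N ^ ((m : ℝ)⁻¹)) := by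
    refine ⟨(24:ℝ)^N, ?_⟩
    rw [eventually_map]
    filter_upwards [eventually_ge_atTop 1] with m hm
    calc _ ≤ (((24:ℝ)^N)^m) ^ ((m:ℝ)⁻¹) :=
          Real.rpow_le_rpow (BH_nonneg _ _) (BH_upper N hm) (by positivity)
      _ = _ := Real.pow_rpow_inv_natCast (by positivity) (by omega)
  refine le_of_forall_lt_imp_le_of_dense fun b hb => ?_
  refine le_limsup_of_frequently_le ?_ hbdd
  rcases le_or_gt b 0 with hb0 | hb0
  · exact (Eventually.of_forall fun m => hb0.trans (Real.rpow_nonneg (BH_nonneg _ _) _)).frequently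
  have hs : (0:ℝ) < √27 := by positivity
  have hb4 : b^4 < √27 := by
    have : ((27:ℝ) ^ ((1:ℝ)/8))^4 = √27 := by
      rw [← Real.rpow_natCast, ← Real.rpow_mul (by norm_num), Real.sqrt_eq_rpow]
      norm_num
    rw [← this]
    exact pow_lt_pow_left₀ hb hb0.le (by norm_num)
  set r := b^4/√27 with hr
  have hr0 : 0 ≤ r := by positivity
  have hr1 : r < 1 := (div_lt_one hs).2 hb4
  have ht : Tendsto (fun n : ℕ => (n:ℝ) * r^n + r^n) atTop (nhds 0) := by
    simpa using (tendsto_self_mul_const_pow_of_lt_one hr0 hr1).add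
      (tendsto_pow_atTop_nhds_zero_of_lt_one hr0 hr1)
  have hev : ∀ᶠ n : ℕ in atTop, b ≤ BHconstN (4*n) N ^ (((4*n : ℕ) : ℝ)⁻¹) := by
    filter_upwards [ht.eventually (gt_mem_nhds one_pos), eventually_ge_atTop 1] with n hn hn1
    have h1 := BH_lower N hN n hn1
    have h2 : b^(4*n) ≤ BHconstN (4*n) N := by
      have e : b^(4*n) = r^n * (√27)^n := by
        rw [← mul_pow, hr, div_mul_cancel₀ _ hs.ne', pow_mul]
      have h3 : (n+1) * r^n ≤ 1 := by linarith
      rw [e]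
      calc _ ≤ r^n * ((n+1) * BHconstN (4*n) N) := by gcongr
        _ = ((n+1) * r^n) * BHconstN (4*n) N := by ring
        _ ≤ 1 * BHconstN (4*n) N := mul_le_mul_of_nonneg_right h3 (BH_nonneg _ _)
        _ = _ := one_mul _
    calc b = (b^(4*n)) ^ (((4*n : ℕ) : ℝ)⁻¹) :=
          (Real.pow_rpow_inv_natCast hb0.le (by omega)).symm
      _ ≤ _ := Real.rpow_le_rpow (by positivity) h2 (by positivity)
  have htt : Tendsto (fun n : ℕ => 4*n) atTop atTop :=
    tendsto_atTop_mono (fun n => by simp only [id]; omega) tendsto_id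
  exact htt.frequently hev.frequently
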